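/- Let E be a real Banach space, c > 0, and S : E × E → E a symmetric continuous bilinear map satisfying ‖S(u,v)‖ ≤ c‖u‖·‖v‖ for all u, v ∈ E. Let η ∈ E and let C > 0 be a constant with C‖η‖ < 1 and 2c/(1 − C‖η‖) ≤ C. Define f₀ = 0, f₁ = η, f_{k+1} = S(f_k, f_k) + η for k ≥ 1, and set g_k = f_k − f_{k-1}. Then for every k ≥ 1 one has ‖g_k‖ ≤ C^{k-1}‖η‖^k. -/

import Mathlib

/-!
The bound `∑ C ^ (k - 1) * ‖η‖ ^ k = ‖η‖ / (1 - C * ‖η‖) =: M` suggested by the claim is the radius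
of a ball around `0` which `u ↦ S u u + η` maps into itself. On that ball the map is Lipschitz with
constant `2 * c * M ≤ C * ‖η‖`, so each increment is at most `C * ‖η‖` times the previous one.
-/

section QuadraticMap

variable {R E F : Type*} [CommSemiring R] [SeminormedAddCommGroup E] [Module R E]
  [SeminormedAddCommGroup F] [Module R F] {c : ℝ}

theorem norm_apply_self_sub_apply_self_le {S : E →ₗ[R] E →ₗ[R] F}
    (hS : ∀ u v, ‖S u v‖ ≤ c * ‖u‖ * ‖v‖) (u v : E) :
    ‖S u u - S v v‖ ≤ c * (‖u‖ + ‖v‖) * ‖u - v‖ := by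
  have telescope : S u u - S v v = S u (u - v) + S (u - v) v := by
    simp only [map_sub, LinearMap.sub_apply, sub_add_sub_cancel]
  calc ‖S u u - S v v‖ ≤ ‖S u (u - v)‖ + ‖S (u - v) v‖ := telescope ▸ norm_add_le _ _
    _ ≤ c * ‖u‖ * ‖u - v‖ + c * ‖u - v‖ * ‖v‖ := add_le_add (hS _ _) (hS _ _)
    _ = c * (‖u‖ + ‖v‖) * ‖u - v‖ := by ring

variable {S : E →ₗ[R] E →ₗ[R] E} {η : E} {f : ℕ → E} {M : ℝ}

theorem norm_quadratic_iterate_le (hc : 0 ≤ c) (hS : ∀ u v, ‖S u v‖ ≤ c * ‖u‖ * ‖v‖)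
    (hf : ∀ k, f (k + 1) = S (f k) (f k) + η) (hf0 : ‖f 0‖ ≤ M)
    (hM : c * M * M + ‖η‖ ≤ M) (k : ℕ) : ‖f k‖ ≤ M := by
  induction k with
  | zero => exact hf0
  | succ k ih =>
    calc ‖f (k + 1)‖ ≤ ‖S (f k) (f k)‖ + ‖η‖ := hf k ▸ norm_add_le _ _
      _ ≤ c * ‖f k‖ * ‖f k‖ + ‖η‖ := by gcongr; exact hS _ _
      _ ≤ c * M * M + ‖η‖ := by gcongr; exact mul_nonneg hc ((norm_nonneg _).trans ih)
      _ ≤ M := hM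

theorem norm_quadratic_iterate_succ_sub_le (hc : 0 ≤ c) (hS : ∀ u v, ‖S u v‖ ≤ c * ‖u‖ * ‖v‖)
    (hf : ∀ k, f (k + 1) = S (f k) (f k) + η) (hfM : ∀ k, ‖f k‖ ≤ M) (k : ℕ) :
    ‖f (k + 1) - f k‖ ≤ (2 * c * M) ^ k * ‖f 1 - f 0‖ := by
  have hM : 0 ≤ M := (norm_nonneg _).trans (hfM 0)
  induction k with
  | zero => simp
  | succ k ih =>
    calc ‖f (k + 2) - f (k + 1)‖ = ‖S (f (k + 1)) (f (k + 1)) - S (f k) (f k)‖ := by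
          rw [hf (k + 1), hf k, add_sub_add_right_eq_sub]
      _ ≤ c * (‖f (k + 1)‖ + ‖f k‖) * ‖f (k + 1) - f k‖ :=
          norm_apply_self_sub_apply_self_le hS _ _
      _ ≤ c * (M + M) * ((2 * c * M) ^ k * ‖f 1 - f 0‖) := by gcongr <;> exact hfM _
      _ = (2 * c * M) ^ (k + 1) * ‖f 1 - f 0‖ := by ring

theorem stmt_4_general {C : ℝ} (hc : 0 ≤ c) (hS : ∀ u v, ‖S u v‖ ≤ c * ‖u‖ * ‖v‖)
    (hCη : C * ‖η‖ < 1) (hCc : 2 * c / (1 - C * ‖η‖) ≤ C) (hf0 : f 0 = 0)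
    (hf : ∀ k, f (k + 1) = S (f k) (f k) + η) (k : ℕ) :
    ‖f (k + 1) - f k‖ ≤ C ^ k * ‖η‖ ^ (k + 1) := by
  have denom_pos : 0 < 1 - C * ‖η‖ := sub_pos.2 hCη
  set M := ‖η‖ / (1 - C * ‖η‖) with hMdef
  have hM : 0 ≤ M := by positivity
  have lipschitz_const_le : 2 * c * M ≤ C * ‖η‖ :=
    calc 2 * c * M = 2 * c / (1 - C * ‖η‖) * ‖η‖ := by rw [hMdef]; ring
      _ ≤ C * ‖η‖ := by gcongr
  have ball_invariant : c * M * M + ‖η‖ ≤ M :=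
    calc c * M * M + ‖η‖ ≤ 2 * c * M * M + ‖η‖ := by gcongr; linarith
      _ ≤ C * ‖η‖ * M + ‖η‖ := by gcongr
      _ = M := by rw [hMdef]; field_simp; ring
  have hfM := norm_quadratic_iterate_le hc hS hf (by simpa [hf0] using hM) ball_invariant
  calc ‖f (k + 1) - f k‖ ≤ (2 * c * M) ^ k * ‖f 1 - f 0‖ :=
        norm_quadratic_iterate_succ_sub_le hc hS hf hfM k
    _ = (2 * c * M) ^ k * ‖η‖ := by simp [hf 0, hf0]
    _ ≤ (C * ‖η‖) ^ k * ‖η‖ := by gcongr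
    _ = C ^ k * ‖η‖ ^ (k + 1) := by ring

end QuadraticMap

/-- Proposition 4.12 stated abstractly: the increments `g_k = f_k − f_{k-1}` of the
iteration `f₀ = 0`, `f₁ = η`, `f_{k+1} = S(f_k, f_k) + η` satisfy
`‖g_k‖ ≤ C^{k-1}‖η‖^k` provided `C‖η‖ < 1` and `2c/(1 − C‖η‖) ≤ C`. -/
theorem stmt_4 {E : Type*} [NormedAddCommGroup E] [NormedSpace ℝ E]
    (c : ℝ) (hc : 0 < c) (S : E →L[ℝ] E →L[ℝ] E)
    (hsymm : ∀ u v : E, S u v = S v u)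
    (hbound : ∀ u v : E, ‖S u v‖ ≤ c * ‖u‖ * ‖v‖)
    (η : E) (C : ℝ) (hC : 0 < C) (hCη : C * ‖η‖ < 1)
    (hCc : 2 * c / (1 - C * ‖η‖) ≤ C)
    (f : ℕ → E) (hf0 : f 0 = 0) (hf1 : f 1 = η)
    (hfrec : ∀ k : ℕ, 1 ≤ k → f (k + 1) = S (f k) (f k) + η)
    (g : ℕ → E) (hg : ∀ k : ℕ, 1 ≤ k → g k = f k - f (k - 1)) :
    ∀ k : ℕ, 1 ≤ k → ‖g k‖ ≤ C ^ (k - 1) * ‖η‖ ^ k := by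
  rintro (_ | k) hk
  · contradiction
  · exact hg _ hk ▸ stmt_4_general (S := S.toLinearMap₁₂) hc.le hbound hCη hCc hf0
      (Nat.rec (by simp [hf0, hf1]) fun k _ => hfrec _ k.succ_pos) k
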